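/- Let R > 0, B > 0, h > 0, and let m be a negative integer. Then for every u ∈ C_c^∞((0,R);ℂ) the fiber quadratic form at angular momentum m satisfies q_m(u) ≥ (2|m| − 1) h B ∫₀^R |u(r)|² r dr; equivalently, μ_m(h) ≥ (2|m| − 1) h B. -/

import Mathlib

/-!
The bound is pointwise in the potential: with `a = m / r` and `b = B r / (2 h)`, the product
`a b = m B / (2 h)` does not depend on `r`, and `(a - b)² = (a + b)² - 4 a b ≥ -2 m B / h`.
Dropping the kinetic term `|u'|²` and integrating against `|u|² r dr` bounds the form.
Dividing by `∫ |u|² r dr > 0` bounds every Rayleigh quotient, hence their infimum.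
-/

open MeasureTheory Filter Topology

noncomputable section

/-- The fiber quadratic form at angular momentum `m`:
`q_m(u) = h²∫₀^R (|u′(r)|² + (m/r − Br/(2h))²|u(r)|²) r dr − hB∫₀^R |u(r)|² r dr`. -/
def qm (R B h : ℝ) (m : ℤ) (u : ℝ → ℂ) : ℝ :=
  h ^ 2 * (∫ r in Set.Ioo (0:ℝ) R,
      (‖deriv u r‖ ^ 2 + ((m : ℝ) / r - B * r / (2 * h)) ^ 2 * ‖u r‖ ^ 2) * r)
    - h * B * ∫ r in Set.Ioo (0:ℝ) R, ‖u r‖ ^ 2 * r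

/-- `u ∈ C_c^∞((0,R); ℂ)`. -/
def IsCptSmooth0R (R : ℝ) (u : ℝ → ℂ) : Prop :=
  ContDiff ℝ (⊤ : ℕ∞) u ∧ HasCompactSupport u ∧ tsupport u ⊆ Set.Ioo 0 R

/-- The bottom of the fiber quadratic form at angular momentum `m`. -/
def mum (R B h : ℝ) (m : ℤ) : ℝ :=
  sInf { c | ∃ u : ℝ → ℂ, IsCptSmooth0R R u ∧ u ≠ 0 ∧
    c = qm R B h m u / ∫ r in Set.Ioo (0:ℝ) R, ‖u r‖ ^ 2 * r }

section WeightedNormSq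

variable {X E : Type*} [TopologicalSpace X] [MeasurableSpace X] [OpensMeasurableSpace X]
  {μ : Measure X} [NormedAddCommGroup E] {u : X → E} {w : X → ℝ}

theorem integrable_norm_sq_mul_of_continuousOn_tsupport [IsFiniteMeasureOnCompacts μ]
    (hu : Continuous u) (hc : HasCompactSupport u) (hw : ContinuousOn w (tsupport u)) :
    Integrable (fun x => ‖u x‖ ^ 2 * w x) μ := by
  have hcont : ContinuousOn (fun x => ‖u x‖ ^ 2 * w x) (tsupport u) := by fun_prop
  refine (hcont.integrableOn_compact' hc (isClosed_tsupport u).measurableSet)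
    |>.integrable_of_forall_notMem_eq_zero fun x hx => ?_
  simp [image_eq_zero_of_notMem_tsupport hx]

theorem setIntegral_norm_sq_mul_pos [IsFiniteMeasureOnCompacts μ] [μ.IsOpenPosMeasure]
    {s : Set X} (hs : MeasurableSet s) (hu : Continuous u) (hc : HasCompactSupport u)
    (hus : tsupport u ⊆ s) (hu0 : u ≠ 0) (hw : ContinuousOn w (tsupport u))
    (hpos : ∀ x ∈ s, 0 < w x) :
    0 < ∫ x in s, ‖u x‖ ^ 2 * w x ∂μ := by
  have hnonneg : 0 ≤ᵐ[μ.restrict s] fun x => ‖u x‖ ^ 2 * w x :=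
    ae_restrict_of_forall_mem hs fun x hx => mul_nonneg (sq_nonneg _) (hpos x hx).le
  have hint := (integrable_norm_sq_mul_of_continuousOn_tsupport (μ := μ) hu hc hw).integrableOn
    (s := s)
  have hsub : Function.support u ⊆ (Function.support fun x => ‖u x‖ ^ 2 * w x) ∩ s := by
    intro x hx
    have hxs : x ∈ s := hus (subset_tsupport u hx)
    exact ⟨mul_ne_zero (pow_ne_zero 2 (norm_ne_zero_iff.2 hx)) (hpos x hxs).ne', hxs⟩
  have hsupp : 0 < μ (Function.support u) :=
    hu.isOpen_support.measure_pos μ (Function.support_nonempty_iff.2 hu0)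
  exact (setIntegral_pos_iff_support_of_nonneg_ae hnonneg hint).2
    (hsupp.trans_le (measure_mono hsub))

end WeightedNormSq

theorem exists_isCptSmooth0R_ne_zero {R : ℝ} (hR : 0 < R) :
    ∃ u : ℝ → ℂ, IsCptSmooth0R R u ∧ u ≠ 0 := by
  obtain ⟨f, hsub, hc, hf, -, hf1⟩ :=
    exists_contDiff_tsupport_subset (n := ⊤) (Ioo_mem_nhds (half_pos hR) (half_lt_self hR))
  have hsupp : tsupport (fun r => (f r : ℂ)) ⊆ tsupport f :=
    closure_mono (Function.support_comp_subset Complex.ofReal_zero f)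
  refine ⟨fun r => (f r : ℂ), ⟨Complex.ofRealCLM.contDiff.comp hf,
    hc.comp_left Complex.ofReal_zero, hsupp.trans hsub⟩, Function.ne_iff.2 ⟨R / 2, ?_⟩⟩
  simp [hf1]

namespace IsCptSmooth0R

variable {R : ℝ} {u : ℝ → ℂ}

protected theorem deriv (hu : IsCptSmooth0R R u) : IsCptSmooth0R R (deriv u) :=
  ⟨(contDiff_infty_iff_deriv.1 hu.1).2, hu.2.1.deriv, tsupport_deriv_subset.trans hu.2.2⟩

theorem integrableOn_norm_sq_mul (hu : IsCptSmooth0R R u) {w : ℝ → ℝ}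
    (hw : ContinuousOn w (Set.Ioo 0 R)) :
    IntegrableOn (fun r => ‖u r‖ ^ 2 * w r) (Set.Ioo 0 R) :=
  (integrable_norm_sq_mul_of_continuousOn_tsupport hu.1.continuous hu.2.1
    (hw.mono hu.2.2)).integrableOn

theorem integral_norm_sq_mul_id_pos (hu : IsCptSmooth0R R u) (hu0 : u ≠ 0) :
    0 < ∫ r in Set.Ioo 0 R, ‖u r‖ ^ 2 * r :=
  setIntegral_norm_sq_mul_pos measurableSet_Ioo hu.1.continuous hu.2.1 hu.2.2 hu0
    continuousOn_id fun _ hr => hr.1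

theorem integrableOn_energy (hu : IsCptSmooth0R R u) {V : ℝ → ℝ}
    (hV : ContinuousOn V (Set.Ioo 0 R)) :
    IntegrableOn (fun r => (‖deriv u r‖ ^ 2 + V r * ‖u r‖ ^ 2) * r) (Set.Ioo 0 R) := by
  have hkinetic := hu.deriv.integrableOn_norm_sq_mul continuousOn_id
  have hpotential := hu.integrableOn_norm_sq_mul (hV.mul continuousOn_id)
  refine (hkinetic.add hpotential).congr_fun (fun r _ => ?_) measurableSet_Ioo
  simp only [Pi.add_apply, Pi.mul_apply, id_eq]
  ring

theorem mul_integral_norm_sq_le_integral_energy (hu : IsCptSmooth0R R u) {V : ℝ → ℝ} {c : ℝ}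
    (hV : ContinuousOn V (Set.Ioo 0 R)) (hc : ∀ r ∈ Set.Ioo 0 R, c ≤ V r) :
    c * ∫ r in Set.Ioo 0 R, ‖u r‖ ^ 2 * r ≤
      ∫ r in Set.Ioo 0 R, (‖deriv u r‖ ^ 2 + V r * ‖u r‖ ^ 2) * r := by
  rw [← integral_const_mul]
  refine setIntegral_mono_on ((hu.integrableOn_norm_sq_mul continuousOn_id).const_mul c)
    (hu.integrableOn_energy hV) measurableSet_Ioo fun r hr => ?_
  have hr0 : 0 ≤ r := hr.1.le
  calc c * (‖u r‖ ^ 2 * r) = c * ‖u r‖ ^ 2 * r := (mul_assoc ..).symm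
    _ ≤ V r * ‖u r‖ ^ 2 * r := by gcongr; exact hc r hr
    _ ≤ (‖deriv u r‖ ^ 2 + V r * ‖u r‖ ^ 2) * r := by
      gcongr
      exact le_add_of_nonneg_left (sq_nonneg _)

end IsCptSmooth0R

theorem neg_two_mul_mul_div_le_sq_div_sub (m B h : ℝ) {r : ℝ} (hr : r ≠ 0) :
    -(2 * m * B / h) ≤ (m / r - B * r / (2 * h)) ^ 2 :=
  calc -(2 * m * B / h) = 4 * (m / r) * -(B * r / (2 * h)) := by field_simp; ring
    _ ≤ (m / r + -(B * r / (2 * h))) ^ 2 := four_mul_le_sq_add _ _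
    _ = (m / r - B * r / (2 * h)) ^ 2 := by rw [← sub_eq_add_neg]

section FiberForm

variable {R B h : ℝ} {m : ℤ}

theorem IsCptSmooth0R.mul_integral_norm_sq_le_qm {u : ℝ → ℂ} (hu : IsCptSmooth0R R u)
    (hh : h ≠ 0) :
    (2 * -(m : ℝ) - 1) * h * B * ∫ r in Set.Ioo 0 R, ‖u r‖ ^ 2 * r ≤ qm R B h m u := by
  have hV : ContinuousOn (fun r : ℝ => ((m : ℝ) / r - B * r / (2 * h)) ^ 2) (Set.Ioo 0 R) := by
    have hdiv : ContinuousOn (fun r : ℝ => (m : ℝ) / r) (Set.Ioo 0 R) :=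
      continuousOn_const.div continuousOn_id fun _ hr => hr.1.ne'
    fun_prop
  have henergy := hu.mul_integral_norm_sq_le_integral_energy hV fun r hr =>
    neg_two_mul_mul_div_le_sq_div_sub m B h hr.1.ne'
  calc (2 * -(m : ℝ) - 1) * h * B * ∫ r in Set.Ioo 0 R, ‖u r‖ ^ 2 * r
      = h ^ 2 * (-(2 * m * B / h) * ∫ r in Set.Ioo 0 R, ‖u r‖ ^ 2 * r)
          - h * B * ∫ r in Set.Ioo 0 R, ‖u r‖ ^ 2 * r := by field_simp
    _ ≤ qm R B h m u :=
      sub_le_sub_right (mul_le_mul_of_nonneg_left henergy (sq_nonneg h)) _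

theorem le_mum_of_forall_mul_integral_norm_sq_le_qm (hR : 0 < R) {c : ℝ}
    (hc : ∀ u, IsCptSmooth0R R u → c * ∫ r in Set.Ioo 0 R, ‖u r‖ ^ 2 * r ≤ qm R B h m u) :
    c ≤ mum R B h m := by
  -- The infimum of the empty set is `0`, so a nonzero test function must be exhibited.
  obtain ⟨v, hv, hv0⟩ := exists_isCptSmooth0R_ne_zero hR
  refine le_csInf ⟨_, v, hv, hv0, rfl⟩ ?_
  rintro _ ⟨u, hu, hu0, rfl⟩
  exact (le_div_iff₀ (hu.integral_norm_sq_mul_id_pos hu0)).2 (hc u hu)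

end FiberForm

theorem stmt9_general (R B h : ℝ) (hR : 0 < R) (hh : h ≠ 0) (m : ℤ) :
    (∀ u : ℝ → ℂ, IsCptSmooth0R R u →
      qm R B h m u ≥ (2 * -(m : ℝ) - 1) * h * B *
        ∫ r in Set.Ioo (0:ℝ) R, ‖u r‖ ^ 2 * r)
    ∧ mum R B h m ≥ (2 * -(m : ℝ) - 1) * h * B :=
  ⟨fun _ hu => hu.mul_integral_norm_sq_le_qm hh,
    le_mum_of_forall_mul_integral_norm_sq_le_qm hR fun _ hu => hu.mul_integral_norm_sq_le_qm hh⟩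

/-- for negative angular momentum `m`, the fiber form satisfies
`q_m(u) ≥ (2|m| − 1) h B ∫₀^R |u|² r dr`; equivalently `μ_m(h) ≥ (2|m| − 1) h B`. -/
theorem stmt9 (R B h : ℝ) (hR : 0 < R) (hB : 0 < B) (hh : 0 < h)
    (m : ℤ) (hm : m < 0) :
    (∀ u : ℝ → ℂ, IsCptSmooth0R R u →
      qm R B h m u ≥ (2 * |(m : ℝ)| - 1) * h * B *
        ∫ r in Set.Ioo (0:ℝ) R, ‖u r‖ ^ 2 * r)
    ∧ mum R B h m ≥ (2 * |(m : ℝ)| - 1) * h * B := by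
  rw [abs_of_neg (Int.cast_lt_zero.2 hm)]
  exact stmt9_general R B h hR hh.ne' m
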